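/- Let a, b, c be complex numbers such that (a+b)/2 is not a nonpositive integer, 2c−2 is not a nonpositive integer, and Re(2c − a − b) > 5. Then ₃F₂(a, b, c; (a+b)/2, 2c−1; 1) = ₃F₂(a, b, c; (a+b)/2, 2c−2; 1) − (abc/((2c−1)(c−1)(a+b))) · ₃F₂(a+1, b+1, c+1; (a+b+2)/2, 2c; 1). -/

import Mathlib

open scoped Nat

/-- The generalized hypergeometric series `₃F₂(a, b, c; d, e; 1)`, defined as
`∑ₙ (a)ₙ(b)ₙ(c)ₙ / ((d)ₙ(e)ₙ n!)` where `(α)ₙ` is the Pochhammer symbol. -/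
noncomputable def hyp3F2 (a b c d e : ℂ) : ℂ :=
  ∑' n : ℕ,
    ((ascPochhammer ℂ n).eval a * (ascPochhammer ℂ n).eval b * (ascPochhammer ℂ n).eval c) /
      ((ascPochhammer ℂ n).eval d * (ascPochhammer ℂ n).eval e * (n ! : ℂ))

/-!
The identity is the case `d = (a + b) / 2`, `e = 2c - 2` of a contiguous relation in the lower
parameter `e` alone. That relation holds term by term: it comes from
`1 / (e)ₙ - 1 / (e + 1)ₙ = n / (e (e + 1)ₙ)`, where the factor `n` cancels against `n!` and so
shifts the summation index by one. Convergence follows from `(α)ₙ₊₁ ~ n ^ α n! / Γ(α)`, a form of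
Euler's limit for `Γ`, by which the terms are asymptotic to a multiple of `1 / n ^ (s + 1)` with
`s = d + e - a - b - c`.
-/

open Filter Topology Asymptotics

section Pochhammer

theorem ascPochhammer_succ_eval_left {R : Type*} [CommSemiring R] (n : ℕ) (x : R) :
    (ascPochhammer R (n + 1)).eval x = x * (ascPochhammer R n).eval (x + 1) := by
  simp [ascPochhammer_succ_left]

theorem ascPochhammer_eval_eq_prod_range {R : Type*} [CommSemiring R] (n : ℕ) (x : R) :
    (ascPochhammer R n).eval x = ∏ j ∈ Finset.range n, (x + j) := by
  induction n with
  | zero => simp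
  | succ n ih => rw [ascPochhammer_succ_eval, ih, Finset.prod_range_succ]

theorem inv_ascPochhammer_eval_sub_inv_add_one {K : Type*} [Field K] {n : ℕ} {x : K}
    (hx : (ascPochhammer K (n + 1)).eval x ≠ 0) :
    ((ascPochhammer K n).eval x)⁻¹ - ((ascPochhammer K n).eval (x + 1))⁻¹ =
      n / (x * (ascPochhammer K n).eval (x + 1)) := by
  have right := ascPochhammer_succ_eval n x
  have left := ascPochhammer_succ_eval_left n x
  obtain ⟨hxn, _⟩ := mul_ne_zero_iff.1 (right ▸ hx)
  obtain ⟨hx0, hxn'⟩ := mul_ne_zero_iff.1 (left ▸ hx)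
  field_simp
  linear_combination right - left

theorem add_one_ne_neg_natCast {R : Type*} [AddCommGroupWithOne R] {x : R}
    (hx : ∀ m : ℕ, x ≠ -(m : R)) (m : ℕ) : x + 1 ≠ -(m : R) := fun h ↦
  hx (m + 1) <| by rw [eq_sub_of_add_eq h, Nat.cast_succ, neg_add, sub_eq_add_neg]

theorem ascPochhammer_eval_ne_zero {R : Type*} [CommRing R] [IsDomain R] {x : R}
    (hx : ∀ m : ℕ, x ≠ -(m : R)) (n : ℕ) : (ascPochhammer R n).eval x ≠ 0 := by
  rw [Ne, ascPochhammer_eval_eq_zero_iff]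
  rintro ⟨k, -, hk⟩
  exact hx k (neg_eq_iff_eq_neg.1 hk.symm)

/-- At a pole of `Γ` both sides vanish, as `Complex.Gamma` is `0` there. -/
theorem tendsto_ascPochhammer_eval_div (x : ℂ) :
    Tendsto (fun n : ℕ ↦ (ascPochhammer ℂ (n + 1)).eval x / (n ^ x * n !)) atTop
      (𝓝 (Complex.Gamma x)⁻¹) := by
  have eq_inv (n : ℕ) : (ascPochhammer ℂ (n + 1)).eval x / (n ^ x * n !) =
      (Complex.GammaSeq x n)⁻¹ := by
    rw [Complex.GammaSeq, inv_div, ascPochhammer_eval_eq_prod_range]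
  by_cases hx : ∀ m : ℕ, x ≠ -(m : ℂ)
  · simpa only [eq_inv] using (Complex.GammaSeq_tendsto_Gamma x).inv₀ (Complex.Gamma_ne_zero hx)
  · obtain ⟨m, rfl⟩ : ∃ m : ℕ, x = -(m : ℂ) := by push Not at hx; exact hx
    rw [Complex.Gamma_neg_nat_eq_zero, inv_zero]
    refine tendsto_const_nhds.congr' ?_
    filter_upwards [eventually_ge_atTop m] with n hn
    rw [ascPochhammer_eval_neg_coe_nat_of_lt (Nat.lt_succ_of_le hn), zero_div]

end Pochhammer

/-- The `n`-th term of the series `₃F₂(a, b, c; d, e; 1)`. -/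
noncomputable def hyp3F2Term (a b c d e : ℂ) (n : ℕ) : ℂ :=
  ((ascPochhammer ℂ n).eval a * (ascPochhammer ℂ n).eval b * (ascPochhammer ℂ n).eval c) /
    ((ascPochhammer ℂ n).eval d * (ascPochhammer ℂ n).eval e * (n ! : ℂ))

section Hypergeometric

variable {a b c d e : ℂ}

theorem hyp3F2_eq_tsum (a b c d e : ℂ) : hyp3F2 a b c d e = ∑' n, hyp3F2Term a b c d e n := rfl

theorem tendsto_hyp3F2Term_div_cpow (hd : ∀ m : ℕ, d ≠ -(m : ℂ)) (he : ∀ m : ℕ, e ≠ -(m : ℂ)) :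
    Tendsto (fun n : ℕ ↦ hyp3F2Term a b c d e (n + 1) / (1 / n ^ (d + e - a - b - c + 1))) atTop
      (𝓝 (Complex.Gamma d * Complex.Gamma e /
        (Complex.Gamma a * Complex.Gamma b * Complex.Gamma c))) := by
  have denom_ne : (Complex.Gamma d)⁻¹ * (Complex.Gamma e)⁻¹ * (Complex.Gamma 1)⁻¹ ≠ 0 := by
    simp [Complex.Gamma_ne_zero hd, Complex.Gamma_ne_zero he]
  have ratio := (((tendsto_ascPochhammer_eval_div a).mul (tendsto_ascPochhammer_eval_div b)).mul
    (tendsto_ascPochhammer_eval_div c)).div (((tendsto_ascPochhammer_eval_div d).mul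
    (tendsto_ascPochhammer_eval_div e)).mul (tendsto_ascPochhammer_eval_div 1)) denom_ne
  have limit_eq : (Complex.Gamma a)⁻¹ * (Complex.Gamma b)⁻¹ * (Complex.Gamma c)⁻¹ /
      ((Complex.Gamma d)⁻¹ * (Complex.Gamma e)⁻¹ * (Complex.Gamma 1)⁻¹) =
      Complex.Gamma d * Complex.Gamma e /
        (Complex.Gamma a * Complex.Gamma b * Complex.Gamma c) := by
    simp only [Complex.Gamma_one, div_eq_mul_inv, mul_inv, inv_inv]
    ring
  refine limit_eq ▸ ratio.congr' ?_
  filter_upwards [eventually_ne_atTop 0] with n hn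
  have hn : (n : ℂ) ≠ 0 := Nat.cast_ne_zero.2 hn
  have pow_ne (z : ℂ) : (n : ℂ) ^ z ≠ 0 := by simp [Complex.cpow_eq_zero_iff, hn]
  have hfac : (n ! : ℂ) ≠ 0 := Nat.cast_ne_zero.2 n.factorial_ne_zero
  have hd' := ascPochhammer_eval_ne_zero hd (n + 1)
  have he' := ascPochhammer_eval_ne_zero he (n + 1)
  have ha := pow_ne a
  have hb := pow_ne b
  have hc := pow_ne c
  simp only [hyp3F2Term, Pi.div_apply, ascPochhammer_eval_one, Complex.cpow_add _ _ hn,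
    Complex.cpow_sub _ _ hn, Complex.cpow_one]
  field_simp

theorem summable_hyp3F2Term (hd : ∀ m : ℕ, d ≠ -(m : ℂ)) (he : ∀ m : ℕ, e ≠ -(m : ℂ))
    (hre : 0 < (d + e - a - b - c).re) : Summable (hyp3F2Term a b c d e) := by
  rw [← summable_nat_add_iff 1]
  have summable_cpow : Summable fun n : ℕ ↦ 1 / (n : ℂ) ^ (d + e - a - b - c + 1) :=
    Complex.summable_one_div_nat_cpow.2 (by simpa using hre)
  refine summable_of_isBigO_nat' summable_cpow
    (isBigO_of_div_tendsto_nhds ?_ _ (tendsto_hyp3F2Term_div_cpow hd he))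
  filter_upwards [eventually_ne_atTop 0] with n hn h
  simp [Complex.cpow_eq_zero_iff, hn] at h

theorem hyp3F2Term_succ_sub_add_one (he : ∀ m : ℕ, e ≠ -(m : ℂ)) (n : ℕ) :
    hyp3F2Term a b c d e (n + 1) - hyp3F2Term a b c d (e + 1) (n + 1) =
      a * b * c / (d * e * (e + 1)) *
        hyp3F2Term (a + 1) (b + 1) (c + 1) (d + 1) (e + 2) n := by
  have factorial_ratio : ((n + 1 : ℕ) : ℂ) / (n + 1)! = (n ! : ℂ)⁻¹ := by
    have hn : ((n + 1 : ℕ) : ℂ) ≠ 0 := Nat.cast_ne_zero.2 n.succ_ne_zero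
    rw [Nat.factorial_succ, Nat.cast_mul, div_mul_cancel_left₀ hn]
  calc hyp3F2Term a b c d e (n + 1) - hyp3F2Term a b c d (e + 1) (n + 1)
    _ = (ascPochhammer ℂ (n + 1)).eval a * (ascPochhammer ℂ (n + 1)).eval b *
          (ascPochhammer ℂ (n + 1)).eval c / ((ascPochhammer ℂ (n + 1)).eval d * (n + 1)!) *
          (((ascPochhammer ℂ (n + 1)).eval e)⁻¹ - ((ascPochhammer ℂ (n + 1)).eval (e + 1))⁻¹) := by
      simp only [hyp3F2Term, div_eq_mul_inv, mul_inv]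
      ring
    _ = (ascPochhammer ℂ (n + 1)).eval a * (ascPochhammer ℂ (n + 1)).eval b *
          (ascPochhammer ℂ (n + 1)).eval c / ((ascPochhammer ℂ (n + 1)).eval d *
          (e * (ascPochhammer ℂ (n + 1)).eval (e + 1))) * (((n + 1 : ℕ) : ℂ) / (n + 1)!) := by
      rw [inv_ascPochhammer_eval_sub_inv_add_one (ascPochhammer_eval_ne_zero he (n + 2))]
      ring
    _ = a * b * c / (d * e * (e + 1)) *
          hyp3F2Term (a + 1) (b + 1) (c + 1) (d + 1) (e + 2) n := by
      simp only [factorial_ratio, hyp3F2Term, ascPochhammer_succ_eval_left, add_assoc,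
        one_add_one_eq_two, div_eq_mul_inv, mul_inv]
      ring

end Hypergeometric

theorem watson_contiguous_19_general (a b c : ℂ) {d e : ℂ}
    (hd : ∀ m : ℕ, d ≠ -(m : ℂ)) (he : ∀ m : ℕ, e ≠ -(m : ℂ))
    (hre : 0 < (d + e - a - b - c).re) :
    hyp3F2 a b c d (e + 1) = hyp3F2 a b c d e -
      a * b * c / (d * e * (e + 1)) * hyp3F2 (a + 1) (b + 1) (c + 1) (d + 1) (e + 2) := by
  have summable_e := summable_hyp3F2Term hd he hre
  have summable_e_add_one : Summable (hyp3F2Term a b c d (e + 1)) := by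
    refine summable_hyp3F2Term hd (add_one_ne_neg_natCast he) ?_
    simp only [Complex.sub_re, Complex.add_re, Complex.one_re] at hre ⊢
    linarith
  have first_terms_eq : hyp3F2Term a b c d e 0 - hyp3F2Term a b c d (e + 1) 0 = 0 := by
    simp [hyp3F2Term]
  have difference : hyp3F2 a b c d e - hyp3F2 a b c d (e + 1) =
      a * b * c / (d * e * (e + 1)) * hyp3F2 (a + 1) (b + 1) (c + 1) (d + 1) (e + 2) := calc
    _ = ∑' n, (hyp3F2Term a b c d e n - hyp3F2Term a b c d (e + 1) n) :=
      (summable_e.tsum_sub summable_e_add_one).symm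
    _ = ∑' n, (hyp3F2Term a b c d e (n + 1) - hyp3F2Term a b c d (e + 1) (n + 1)) := by
      rw [(summable_e.sub summable_e_add_one).tsum_eq_zero_add, first_terms_eq, zero_add]
    _ = _ := by simp only [hyp3F2Term_succ_sub_add_one he, tsum_mul_left, hyp3F2_eq_tsum]
  rw [← difference, sub_sub_cancel]

theorem watson_contiguous_19 (a b c : ℂ)
    (hd : ∀ m : ℕ, (a + b) / 2 ≠ -(m : ℂ))
    (he : ∀ m : ℕ, 2 * c - 2 ≠ -(m : ℂ))
    (hre : (2 * c - a - b).re > 5) :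
    hyp3F2 a b c ((a + b) / 2) (2 * c - 1) =
      hyp3F2 a b c ((a + b) / 2) (2 * c - 2) -
        a * b * c / ((2 * c - 1) * (c - 1) * (a + b)) *
          hyp3F2 (a + 1) (b + 1) (c + 1) ((a + b + 2) / 2) (2 * c) := by
  have hre_pos : 0 < ((a + b) / 2 + (2 * c - 2) - a - b - c).re := by
    simp only [Complex.sub_re, Complex.mul_re, Complex.add_re, Complex.div_ofNat_re,
      Complex.re_ofNat, Complex.im_ofNat, zero_mul, sub_zero] at hre ⊢
    linarith
  convert watson_contiguous_19_general a b c hd he hre_pos using 3 <;> ring_nf
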